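/- Let m ≥ 1 and k ≥ 2 be integers, and let G be a graph whose complement is K_k^m-free. If G contains a Hamiltonian path, then G contains a collection of at most k − 1 vertex-disjoint cycles covering all but at most k·m vertices of G. -/

import Mathlib

def ContainsCopy {α β : Type*} (H : SimpleGraph α) (G : SimpleGraph β) : Prop :=
  ∃ f : α → β, Function.Injective f ∧ ∀ a b, H.Adj a b → G.Adj (f a) (f b)

def IsCycleSet {V : Type*} (G : SimpleGraph V) (S : Set V) : Prop :=
  (∃ v, S = {v}) ∨
  (∃ u v, G.Adj u v ∧ S = {u, v}) ∨
  (∃ (v : V) (w : G.Walk v v), w.IsCycle ∧ S = {x | x ∈ w.support})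

/-!
Follow a path and let `P` be its first `m + 1` vertices. Let `y` be the last vertex of the path
that is equal or adjacent to some `x ∈ P`, that is, not joined to `x` in the complement. The
segment from `x` to `y` is closed up by the edge `xy` into a cycle, at most `m` vertices before
`x` are lost, and every vertex of `P` is joined in the complement to every vertex after `y`.
Repeating this on the rest of the path, each round loses at most `m` vertices, and either the path
runs down to at most `m` vertices before the `k`-th round, or the `k` initial segments met on the
way are the parts of a `K_k^(m+1)` in the complement.
-/

section

open SimpleGraph Finset

variable {V : Type*} {G : SimpleGraph V}

theorem containsCopy_iff_isContained {α β : Type*} {H : SimpleGraph α} {G : SimpleGraph β} :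
    ContainsCopy H G ↔ H ⊑ G :=
  ⟨fun ⟨f, hinj, hadj⟩ ↦ ⟨⟨f, hadj _ _⟩, hinj⟩,
    fun ⟨f⟩ ↦ ⟨f, f.injective, fun _ _ ↦ f.toHom.map_adj⟩⟩

theorem containsCopy_completeMultipartiteGraph_of_completeEquipartiteSubgraph {r t : ℕ}
    (K : G.CompleteEquipartiteSubgraph r t) :
    ContainsCopy (completeMultipartiteGraph fun _ : Fin r ↦ Fin t) G :=
  containsCopy_iff_isContained.mpr <|
    completeEquipartiteGraph.completeMultipartiteGraph.symm.isContained.trans ⟨K.toCopy⟩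

theorem exists_completeEquipartiteSubgraph_succ {r t : ℕ}
    (K : G.CompleteEquipartiteSubgraph r t) {s : Finset V} (hs : #s = t)
    (hK : ∀ p ∈ K.parts, G.IsCompleteBetween s p) :
    ∃ K' : G.CompleteEquipartiteSubgraph (r + 1) t, ∀ p, p ∈ K'.parts ↔ p = s ∨ p ∈ K.parts := by
  classical
  refine ⟨⟨insert s K.parts, or_iff_not_imp_right.mpr fun ht ↦ ?_, ?_, ?_⟩, fun p ↦ mem_insert⟩
  · have hs_notMem : s ∉ K.parts := fun hmem ↦ by
      obtain ⟨v, hv⟩ : s.Nonempty := card_pos.mp (by omega)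
      exact G.irrefl (hK s hmem hv hv)
    rw [card_insert_of_notMem hs_notMem, K.card_parts.resolve_right ht]
  · exact fun hp ↦ (mem_insert.mp hp).elim (fun h ↦ h ▸ hs) K.card_mem_parts
  · rw [coe_insert]
    exact K.isCompleteBetween.insert fun p hp _ ↦ ⟨hK p hp, (hK p hp).symm⟩

theorem isCycleSet_support_of_not_compl_adj {x y : V} {w : G.Walk x y} (hw : w.IsPath)
    (hxy : ¬ Gᶜ.Adj x y) : IsCycleSet G {v | v ∈ w.support} := by
  match w with
  | .nil => exact .inl ⟨x, by simp⟩
  | .cons h .nil => exact .inr (.inl ⟨x, y, h, by ext; simp⟩)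
  | .cons h (.cons h' p) =>
    have hne : x ≠ y := by
      rintro rfl
      exact (Walk.cons_isPath_iff _ _).mp hw |>.2 (Walk.end_mem_support _)
    have hadj : G.Adj x y := by simpa [hne] using hxy
    refine .inr (.inr ⟨y, .cons hadj.symm (.cons h (.cons h' p)), ?_, ?_⟩)
    · exact Walk.isCycle_iff_isPath_tail_and_le_length.mpr ⟨by simpa using hw, by simp⟩
    · ext v
      have hy : v = y → v ∈ p.support := fun h ↦ h ▸ p.end_mem_support
      simp only [Walk.support_cons, List.mem_cons, Set.mem_ofPred_eq]
      tauto

theorem isCycleSet_of_isChain {l : List V} (hne : l ≠ []) (hchain : l.IsChain G.Adj)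
    (hnodup : l.Nodup) (hclose : ¬ Gᶜ.Adj (l.head hne) (l.getLast hne)) :
    IsCycleSet G {v | v ∈ l} := by
  have hsupport := Walk.support_ofSupport hne hchain
  have hpath : (Walk.ofSupport l hne hchain).IsPath := by
    rwa [Walk.isPath_def, hsupport]
  simpa only [hsupport] using isCycleSet_support_of_not_compl_adj hpath hclose

theorem exists_eq_append_not_rel_head_getLast {α : Type*} {r : α → α → Prop}
    (hr : ∀ x, ¬ r x x) {l : List α} {m : ℕ} (hlen : m < l.length) :
    ∃ A B C, l = A ++ B ++ C ∧ A.length ≤ m ∧ (∃ hB : B ≠ [], ¬ r (B.head hB) (B.getLast hB)) ∧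
      ∀ x ∈ l.take (m + 1), ∀ y ∈ C, r x y := by
  classical
  set P := l.take (m + 1) with hP
  set R := l.drop (m + 1)
  let q : α → Bool := fun y ↦ ∀ x ∈ P, r x y
  have hP_ne : P ≠ [] := List.ne_nil_of_length_pos (by simp [hP, Nat.zero_lt_of_lt hlen])
  have hne : P ++ R.rdropWhile q ≠ [] := List.append_ne_nil_of_left_ne_nil hP_ne _
  obtain ⟨x, hxP, hx⟩ : ∃ x ∈ P, ¬ r x ((P ++ R.rdropWhile q).getLast hne) := by
    by_cases hR : R.rdropWhile q = []
    · exact ⟨P.getLast hP_ne, List.getLast_mem _, by simp [hR, hr]⟩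
    · have hlast := List.rdropWhile_last_not q R hR
      rw [List.getLast_append_of_ne_nil _ hR]
      simpa only [q, decide_eq_true_eq, not_forall, exists_prop] using hlast
  obtain ⟨A, P', hP_eq⟩ := List.append_of_mem hxP
  refine ⟨A, x :: (P' ++ R.rdropWhile q), R.rtakeWhile q, ?_, ?_, ⟨List.cons_ne_nil _ _, ?_⟩, ?_⟩
  · calc l = P ++ (R.rdropWhile q ++ R.rtakeWhile q) := by
          rw [List.rdropWhile_append_rtakeWhile, List.take_append_drop]
      _ = _ := by simp [hP_eq]
  · have hP_length : P.length ≤ m + 1 := List.length_take_le _ _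
    simp only [hP_eq, List.length_append, List.length_cons] at hP_length
    omega
  · simpa [hP_eq] using hx
  · intro x hx y hy
    have hqy : q y := List.mem_rtakeWhile_imp hy
    exact of_decide_eq_true hqy x hx

theorem exists_eq_append_isCycleSet {l : List V} (hchain : l.IsChain G.Adj) (hnodup : l.Nodup)
    {m : ℕ} (hlen : m < l.length) :
    ∃ A B C, l = A ++ B ++ C ∧ A.length ≤ m ∧ IsCycleSet G {v | v ∈ B} ∧
      Gᶜ.IsCompleteBetween {x | x ∈ l.take (m + 1)} {y | y ∈ C} := by
  obtain ⟨A, B, C, hl, hA, ⟨hB, hclose⟩, hC⟩ :=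
    exists_eq_append_not_rel_head_getLast (fun _ ↦ Gᶜ.irrefl) hlen
  have hinfix : B <:+: l := ⟨A, C, hl.symm⟩
  exact ⟨A, B, C, hl, hA, isCycleSet_of_isChain hB (hchain.infix hinfix)
    (hnodup.sublist hinfix.sublist) hclose, fun x hx y hy ↦ hC x hx y hy⟩

/-- A packing of cycles: a family of pairwise disjoint vertex sets of cycles of `G`, all inside
`T`. Single vertices and edges count as cycles, as in `IsCycleSet`. -/
structure IsCyclePacking (G : SimpleGraph V) (T : Set V) (𝒞 : Finset (Set V)) : Prop where
  pairwise_disjoint : (𝒞 : Set (Set V)).Pairwise Disjoint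
  isCycleSet : ∀ S ∈ 𝒞, IsCycleSet G S
  subset : ∀ S ∈ 𝒞, S ⊆ T

theorem IsCyclePacking.empty (T : Set V) : IsCyclePacking G T ∅ :=
  ⟨by simp, by simp, by simp⟩

theorem IsCyclePacking.insert [DecidableEq (Set V)] {S T U : Set V} {𝒞 : Finset (Set V)}
    (h𝒞 : IsCyclePacking G T 𝒞) (hS : IsCycleSet G S) (hST : Disjoint S T) (hSU : S ⊆ U)
    (hTU : T ⊆ U) : IsCyclePacking G U (insert S 𝒞) where
  pairwise_disjoint := by
    rw [coe_insert]
    refine h𝒞.pairwise_disjoint.insert fun S' hS' _ ↦ ?_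
    have hdisj := hST.mono_right (h𝒞.subset S' hS')
    exact ⟨hdisj, hdisj.symm⟩
  isCycleSet := forall_mem_insert _ _ _ |>.mpr ⟨hS, h𝒞.isCycleSet⟩
  subset := forall_mem_insert _ _ _ |>.mpr ⟨hSU, fun S' hS' ↦ (h𝒞.subset S' hS').trans hTU⟩

theorem ncard_setOf_mem_le_length (l : List V) : {v | v ∈ l}.ncard ≤ l.length := by
  classical
  rw [← List.coe_toFinset, Set.ncard_coe_finset]
  exact l.toFinset_card_le

theorem ncard_append_sdiff_sUnion_insert_le (A B C : List V) (𝒞 : Set (Set V)) :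
    ({v | v ∈ A ++ B ++ C} \ ⋃₀ insert {v | v ∈ B} 𝒞).ncard ≤
      A.length + ({v | v ∈ C} \ ⋃₀ 𝒞).ncard := by
  have hsubset : {v | v ∈ A ++ B ++ C} \ ⋃₀ insert {v | v ∈ B} 𝒞 ⊆
      {v | v ∈ A} ∪ ({v | v ∈ C} \ ⋃₀ 𝒞) := by
    intro v
    simp only [Set.sUnion_insert, List.mem_append, Set.mem_sdiff, Set.mem_union, Set.mem_ofPred_eq]
    tauto
  calc _ ≤ ({v | v ∈ A} ∪ ({v | v ∈ C} \ ⋃₀ 𝒞)).ncard :=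
        Set.ncard_le_ncard hsubset (A.finite_toSet.union (C.finite_toSet.sdiff))
    _ ≤ {v | v ∈ A}.ncard + ({v | v ∈ C} \ ⋃₀ 𝒞).ncard := Set.ncard_union_le _ _
    _ ≤ A.length + ({v | v ∈ C} \ ⋃₀ 𝒞).ncard := by gcongr; exact ncard_setOf_mem_le_length A

theorem exists_completeEquipartiteSubgraph_compl_or_isCyclePacking (m k : ℕ) {l : List V}
    (hchain : l.IsChain G.Adj) (hnodup : l.Nodup) :
    (∃ K : Gᶜ.CompleteEquipartiteSubgraph k (m + 1), ∀ p ∈ K.parts, ∀ v ∈ p, v ∈ l) ∨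
      ∃ 𝒞, #𝒞 < k ∧ IsCyclePacking G {v | v ∈ l} 𝒞 ∧
        ({v | v ∈ l} \ ⋃₀ (𝒞 : Set (Set V))).ncard ≤ k * m := by
  classical
  induction k generalizing l with
  | zero => exact .inl ⟨⟨∅, by simp, by simp, by simp⟩, by simp⟩
  | succ k ih =>
    obtain hlen | hlen := le_or_gt l.length m
    · refine .inr ⟨∅, by simp, .empty _, ?_⟩
      calc _ = {v | v ∈ l}.ncard := by simp
        _ ≤ l.length := ncard_setOf_mem_le_length l
        _ ≤ (k + 1) * m := hlen.trans (Nat.le_mul_of_pos_left m k.succ_pos)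
    obtain ⟨A, B, C, rfl, hA, hB, hC⟩ := exists_eq_append_isCycleSet hchain hnodup hlen
    obtain ⟨K, hK⟩ | ⟨𝒞, hcard, h𝒞, huncovered⟩ := ih hchain.right_of_append hnodup.of_append_right
    · left
      have hP_card : #((A ++ B ++ C).take (m + 1)).toFinset = m + 1 :=
        (List.toFinset_card_of_nodup (hnodup.sublist (List.take_sublist _ _))).trans
          (List.length_take_of_le hlen)
      obtain ⟨K', hK'⟩ := exists_completeEquipartiteSubgraph_succ K hP_card
        fun p hp x hx y hy ↦ hC (List.mem_toFinset.mp hx) (hK p hp y hy)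
      refine ⟨K', fun p hp v hv ↦ ?_⟩
      obtain rfl | hp := (hK' p).mp hp
      · exact List.mem_of_mem_take (List.mem_toFinset.mp hv)
      · exact List.mem_append_right _ (hK p hp v hv)
    · right
      have hdisj : Disjoint {v | v ∈ B} {v | v ∈ C} :=
        Set.disjoint_left.mpr fun v hv ↦
          List.disjoint_of_nodup_append hnodup (List.mem_append_right A hv)
      refine ⟨insert {v | v ∈ B} 𝒞, ?_, h𝒞.insert hB hdisj ?_ ?_, ?_⟩
      · exact (card_insert_le _ _).trans_lt (by omega)
      · exact fun v hv ↦ List.mem_append_left C (List.mem_append_right A hv)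
      · exact fun v ↦ List.mem_append_right (A ++ B)
      · rw [coe_insert]
        calc _ ≤ A.length + ({v | v ∈ C} \ ⋃₀ (𝒞 : Set (Set V))).ncard :=
              ncard_append_sdiff_sUnion_insert_le A B C 𝒞
          _ ≤ m + k * m := by gcongr
          _ = (k + 1) * m := by ring

theorem stmt5_general {m k : ℕ}
    (hfree : ¬ ContainsCopy (completeMultipartiteGraph fun _ : Fin k ↦ Fin (m + 1)) Gᶜ)
    {a b : V} {w : G.Walk a b} (hw : w.IsPath) :
    ∃ 𝒞, #𝒞 < k ∧ IsCyclePacking G {v | v ∈ w.support} 𝒞 ∧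
      ({v | v ∈ w.support} \ ⋃₀ (𝒞 : Set (Set V))).ncard ≤ k * m :=
  exists_completeEquipartiteSubgraph_compl_or_isCyclePacking m k w.isChain_adj_support
    hw.support_nodup |>.resolve_left fun ⟨K, _⟩ ↦
      hfree (containsCopy_completeMultipartiteGraph_of_completeEquipartiteSubgraph K)

end

/-- Let `m ≥ 1`, `k ≥ 2` be integers, and let `G` be a graph whose complement
is `K_k^m`-free. If `G` contains a Hamiltonian path, then `G` contains at most `k - 1`
vertex-disjoint cycles covering all but at most `k·m` vertices of `G`. -/
theorem stmt5 {V : Type*} [Fintype V] [DecidableEq V] (m k : ℕ) (hm : 1 ≤ m) (hk : 2 ≤ k)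
    (G : SimpleGraph V)
    (hfree : ¬ ContainsCopy (SimpleGraph.completeMultipartiteGraph fun _ : Fin k => Fin m) Gᶜ)
    (hham : ∃ (a b : V) (w : G.Walk a b), w.IsHamiltonian) :
    ∃ 𝒞 : Finset (Set V),
      𝒞.card ≤ k - 1 ∧
      (𝒞 : Set (Set V)).Pairwise Disjoint ∧
      (∀ S ∈ 𝒞, IsCycleSet G S) ∧
      (Set.univ \ ⋃₀ (𝒞 : Set (Set V))).ncard ≤ k * m := by
  obtain ⟨m, rfl⟩ := Nat.exists_eq_add_of_le' hm
  obtain ⟨a, b, w, hw⟩ := hham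
  obtain ⟨𝒞, hcard, h𝒞, huncovered⟩ := stmt5_general hfree hw.isPath
  have hsupport : {v | v ∈ w.support} = Set.univ := Set.eq_univ_of_forall hw.mem_support
  rw [hsupport] at huncovered
  exact ⟨𝒞, Nat.le_sub_one_of_lt hcard, h𝒞.pairwise_disjoint, h𝒞.isCycleSet,
    huncovered.trans (Nat.mul_le_mul_left k m.le_succ)⟩
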